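/- Let n ≥ 1, let γ > ０, let δ > 0, and let φ : ℝ → ℝⁿ be continuous with |φ(s)| ≤ φ_M for all s ≥ 0, where φ_M ≥ 0. Assume that for every k ∈ ℕ, φ is exciting on [kδ, (k+1)δ] with level η > 0. Set α = 2ηγ/(1 + φ_M²γδ)², κ = (1 − α)^{−1/2} and λ = −log(1 − α)/(2δ). Then κ ≥ 1, λ > 0, and every solution x : [0,∞) → ℝⁿ of the gradient-flow error dynamics x'(t) = −γ⟨φ(t), x(t)⟩φ(t) satisfies |x(t)| ≤ κ e^{−λt} |x(0)| for all t ≥ 0. -/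

import Mathlib

open scoped RealInnerProductSpace

/-- Derivative of the squared norm along the flow. -/
theorem aux_deriv {n : ℕ} {γ : ℝ} {φ x : ℝ → EuclideanSpace ℝ (Fin n)} {t : ℝ}
    (h : HasDerivAt x (-(γ * ⟪φ t, x t⟫) • φ t) t) :
    HasDerivAt (fun s => ‖x s‖ ^ 2) (-(2 * γ) * ⟪φ t, x t⟫ ^ 2) t := by
  have h2 := h.norm_sq
  convert h2 using 1
  rw [inner_smul_right, real_inner_comm]
  ring

theorem aux_anti {n : ℕ} {γ : ℝ} (hγ : 0 < γ) {φ x : ℝ → EuclideanSpace ℝ (Fin n)}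
    (h : ∀ t : ℝ, 0 ≤ t → HasDerivAt x (-(γ * ⟪φ t, x t⟫) • φ t) t) :
    AntitoneOn (fun s => ‖x s‖ ^ 2) (Set.Ici 0) := by
  apply antitoneOn_of_deriv_nonpos (convex_Ici 0)
  · intro t ht
    exact (aux_deriv (h t ht)).continuousAt.continuousWithinAt
  · intro t ht
    rw [interior_Ici] at ht
    exact (aux_deriv (h t (le_of_lt ht))).differentiableAt.differentiableWithinAt
  · intro t ht
    rw [interior_Ici] at ht
    rw [(aux_deriv (h t (le_of_lt ht))).deriv]
    nlinarith [mul_nonneg hγ.le (sq_nonneg ⟪φ t, x t⟫)]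

/-- Displacement bound. -/
theorem aux_disp {n : ℕ} {γ : ℝ} (hγ : 0 < γ) {φM : ℝ} (hφM : 0 < φM)
    {φ x : ℝ → EuclideanSpace ℝ (Fin n)}
    (hbound : ∀ s : ℝ, 0 ≤ s → ‖φ s‖ ≤ φM)
    (h : ∀ t : ℝ, 0 ≤ t → HasDerivAt x (-(γ * ⟪φ t, x t⟫) • φ t) t)
    {a b : ℝ} (ha : 0 ≤ a) {s : ℝ} (hs : s ∈ Set.Icc a b) :
    ‖x s - x a‖ ^ 2 ≤ (γ * φM) ^ 2 * (b - a) * ((‖x a‖ ^ 2 - ‖x b‖ ^ 2) / (2 * γ)) := by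
  have key : ∀ c : ℝ, 0 < c → ‖x s - x a‖ ≤
      γ * φM / 2 * (c * ((‖x a‖ ^ 2 - ‖x s‖ ^ 2) / (2 * γ)) + (s - a) / c) := by
    intro c hc
    have hB : ∀ t ∈ Set.Icc a b, HasDerivAt (fun t => γ * φM / 2 *
        (c * ((‖x a‖ ^ 2 - ‖x t‖ ^ 2) / (2 * γ)) + (t - a) / c))
        (γ * φM / 2 * (c * ((- (-(2 * γ) * ⟪φ t, x t⟫ ^ 2)) / (2 * γ)) + 1 / c)) t := by
      intro t ht
      have h1 := aux_deriv (h t (ha.trans ht.1))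
      exact (((((h1.const_sub (‖x a‖ ^ 2)).div_const (2 * γ)).const_mul c).add
        (((hasDerivAt_id t).sub_const a).div_const c)).const_mul (γ * φM / 2))
    have hx : ∀ t ∈ Set.Icc a b, HasDerivAt (fun t => x t - x a)
        (-(γ * ⟪φ t, x t⟫) • φ t) t := fun t ht => (h t (ha.trans ht.1)).sub_const _
    refine image_norm_le_of_norm_deriv_right_le_deriv_boundary'
      (f := fun t => x t - x a) (a := a) (b := b)
      (fun t ht => (hx t ht).continuousAt.continuousWithinAt)
      (fun t ht => (hx t (Set.Ico_subset_Icc_self ht)).hasDerivWithinAt) ?_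
      (fun t ht => (hB t ht).continuousAt.continuousWithinAt)
      (fun t ht => (hB t (Set.Ico_subset_Icc_self ht)).hasDerivWithinAt) ?_ hs
    · simp
    · intro t ht
      rw [norm_smul, Real.norm_eq_abs, abs_neg, abs_mul, abs_of_pos hγ]
      have h1 := hbound t (ha.trans ht.1)
      set p := ⟪φ t, x t⟫
      have e : c * (-(-(2 * γ) * p ^ 2) / (2 * γ)) + 1 / c = c * |p| ^ 2 + 1 / c := by
        rw [sq_abs]; field_simp
      rw [e]
      have h2 : 2 * |p| ≤ c * |p| ^ 2 + 1 / c := by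
        have : c * |p| ^ 2 + 1 / c - 2 * |p| = (c * |p| - 1) ^ 2 / c := by field_simp; ring
        have h3 : 0 ≤ (c * |p| - 1) ^ 2 / c := by positivity
        linarith
      calc γ * |p| * ‖φ t‖ ≤ γ * |p| * φM := by gcongr
        _ = γ * φM / 2 * (2 * |p|) := by ring
        _ ≤ _ := by gcongr
  have hanti := aux_anti hγ h (ha.trans hs.1) ((ha.trans hs.1).trans hs.2) hs.2
  have hanti2 := aux_anti hγ h (Set.mem_Ici.2 ha) (ha.trans hs.1) hs.1
  simp only at hanti hanti2
  have hab : a ≤ b := hs.1.trans hs.2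
  set K := γ * φM with hK
  have hKp : 0 < K := by positivity
  set I := (‖x a‖ ^ 2 - ‖x b‖ ^ 2) / (2 * γ) with hI
  have hI0 : 0 ≤ I := div_nonneg (by linarith) (by positivity)
  have hba : 0 ≤ b - a := by linarith
  rcases (norm_nonneg (x s - x a)).eq_or_lt with hD | hD
  · rw [← hD]; simp only [ne_eq, OfNat.ofNat_ne_zero, not_false_eq_true, zero_pow]; positivity
  rcases hab.eq_or_lt with hab' | hab'
  · have : s = a := le_antisymm (hab' ▸ hs.2) hs.1
    simp [this] at hD
  set D := ‖x s - x a‖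
  have hd : 0 < b - a := by linarith
  have hk := key ((b - a) * K / D) (by positivity)
  have h1 : (‖x a‖ ^ 2 - ‖x s‖ ^ 2) / (2 * γ) ≤ I := by
    rw [hI]; gcongr
  have h2 : D ≤ K / 2 * ((b - a) * K / D * I + (b - a) / ((b - a) * K / D)) := by
    refine hk.trans ?_
    have := hs.2
    gcongr
  have h3 : K / 2 * ((b - a) * K / D * I + (b - a) / ((b - a) * K / D))
      = (K ^ 2 * (b - a) * I / D + D) / 2 := by
    field_simp
  rw [h3] at h2
  have h4 : D ≤ K ^ 2 * (b - a) * I / D := by linarith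
  rw [le_div_iff₀ hD] at h4
  nlinarith

/-- One-window contraction. -/
theorem aux_window {n : ℕ} {γ : ℝ} (hγ : 0 < γ) {φM : ℝ} (hφM : 0 < φM) {η δ : ℝ} (hδ : 0 < δ)
    {φ x : ℝ → EuclideanSpace ℝ (Fin n)} (hφc : Continuous φ)
    (hbound : ∀ s : ℝ, 0 ≤ s → ‖φ s‖ ≤ φM)
    (h : ∀ t : ℝ, 0 ≤ t → HasDerivAt x (-(γ * ⟪φ t, x t⟫) • φ t) t)
    {a b : ℝ} (ha : 0 ≤ a) (hab : b - a = δ)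
    (hexc : η * ‖x a‖ ^ 2 ≤ ∫ s in a..b, ⟪φ s, x a⟫ ^ 2) :
    ‖x b‖ ^ 2 ≤ (1 - 2 * η * γ / (1 + φM ^ 2 * γ * δ) ^ 2) * ‖x a‖ ^ 2 := by
  have hab' : a ≤ b := by linarith
  set u := φM ^ 2 * γ * δ with hu
  have hu0 : 0 < u := by positivity
  set I := (‖x a‖ ^ 2 - ‖x b‖ ^ 2) / (2 * γ) with hI
  set C := (1 + 1 / u) * (φM ^ 2 * ((γ * φM) ^ 2 * δ * I)) with hC
  have hg : ∀ t ∈ Set.Icc a b, HasDerivAt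
      (fun t => -((1 + u) / (2 * γ)) * ‖x t‖ ^ 2 + C * t)
      (-((1 + u) / (2 * γ)) * (-(2 * γ) * ⟪φ t, x t⟫ ^ 2) + C * 1) t := fun t ht =>
    ((aux_deriv (h t (ha.trans ht.1))).const_mul _).add ((hasDerivAt_id t).const_mul C)
  have hint := intervalIntegral.integral_le_sub_of_hasDeriv_right_of_le
    (φ := fun s => ⟪φ s, x a⟫ ^ 2) hab'
    (fun t ht => (hg t ht).continuousAt.continuousWithinAt)
    (fun t ht => (hg t (Set.Ioo_subset_Icc_self ht)).hasDerivWithinAt)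
    (Continuous.integrableOn_Icc (by fun_prop)) ?_
  · have h1 := hexc.trans hint
    have h2 : -((1 + u) / (2 * γ)) * ‖x b‖ ^ 2 + C * b
      - (-((1 + u) / (2 * γ)) * ‖x a‖ ^ 2 + C * a) = (1 + u) ^ 2 * I := by
      have e1 : -((1 + u) / (2 * γ)) * ‖x b‖ ^ 2 + C * b
        - (-((1 + u) / (2 * γ)) * ‖x a‖ ^ 2 + C * a) = (1 + u) * I + C * δ := by
        rw [hI, ← hab]; ring
      have e2 : C * δ = (1 + 1 / u) * (u ^ 2 * I) := by rw [hC, hu]; ring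
      rw [e1, e2]; field_simp; ring
    rw [h2] at h1
    have h3 : ‖x b‖ ^ 2 = ‖x a‖ ^ 2 - 2 * γ * I := by rw [hI]; field_simp; ring
    rw [h3]
    have h4 : η * ‖x a‖ ^ 2 / (1 + u) ^ 2 ≤ I := by
      rw [div_le_iff₀ (by positivity)]; linarith
    have h5 : (1 - 2 * η * γ / (1 + u) ^ 2) * ‖x a‖ ^ 2
        = ‖x a‖ ^ 2 - 2 * γ * (η * ‖x a‖ ^ 2 / (1 + u) ^ 2) := by ring
    rw [h5]
    nlinarith
  · intro t ht
    have hd := aux_disp hγ hφM hbound h ha (Set.Ioo_subset_Icc_self ht)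
    rw [hab, ← hI] at hd
    have hb := hbound t (ha.trans ht.1.le)
    have e : ⟪φ t, x a⟫ = ⟪φ t, x t⟫ - ⟪φ t, x t - x a⟫ := by
      rw [inner_sub_right]; ring
    have hq : ⟪φ t, x t - x a⟫ ^ 2 ≤ φM ^ 2 * ((γ * φM) ^ 2 * δ * I) := by
      calc ⟪φ t, x t - x a⟫ ^ 2 = |⟪φ t, x t - x a⟫| ^ 2 := (sq_abs _).symm
        _ ≤ (‖φ t‖ * ‖x t - x a‖) ^ 2 := by gcongr; exact abs_real_inner_le_norm _ _
        _ = ‖φ t‖ ^ 2 * ‖x t - x a‖ ^ 2 := by ring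
        _ ≤ _ := by gcongr
    rw [e]
    generalize ⟪φ t, x t - x a⟫ = q at *
    generalize ⟪φ t, x t⟫ = p at *
    have e3 : -((1 + u) / (2 * γ)) * (-(2 * γ) * p ^ 2) + C * 1 = (1 + u) * p ^ 2 + C := by
      field_simp
    rw [e3]
    have h6 : (1 + 1 / u) * q ^ 2 ≤ C := by rw [hC]; gcongr
    have h7 : (1 + u) * p ^ 2 + (1 + 1 / u) * q ^ 2 - (p - q) ^ 2 = (u * p + q) ^ 2 / u := by
      field_simp; ring
    have h8 : 0 ≤ (u * p + q) ^ 2 / u := by positivity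
    linarith

/-- Exponential decay of the error norm under excitation on
every window `[kδ, (k+1)δ]`. -/
theorem stmt18 (n : ℕ) (hn : 1 ≤ n) (γ : ℝ) (hγ : 0 < γ) (δ : ℝ) (hδ : 0 < δ)
    (φM : ℝ) (hφM : 0 ≤ φM) (η : ℝ) (hη : 0 < η)
    (φ : ℝ → EuclideanSpace ℝ (Fin n)) (hφc : Continuous φ)
    (hbound : ∀ s : ℝ, 0 ≤ s → ‖φ s‖ ≤ φM)
    (hexc : ∀ k : ℕ, ∀ v : EuclideanSpace ℝ (Fin n),
      η * ‖v‖ ^ 2 ≤ ∫ s in ((k : ℝ) * δ)..(((k : ℝ) + 1) * δ), ⟪φ s, v⟫ ^ 2)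
    (α κ lam : ℝ) (hα : α = 2 * η * γ / (1 + φM ^ 2 * γ * δ) ^ 2)
    (hκ : κ = (1 - α) ^ (-(1 : ℝ) / 2)) (hlam : lam = -Real.log (1 - α) / (2 * δ)) :
    1 ≤ κ ∧ 0 < lam ∧
      ∀ x : ℝ → EuclideanSpace ℝ (Fin n),
        (∀ t : ℝ, 0 ≤ t → HasDerivAt x (-(γ * ⟪φ t, x t⟫) • φ t) t) →
        ∀ t : ℝ, 0 ≤ t → ‖x t‖ ≤ κ * Real.exp (-lam * t) * ‖x 0‖ := by
  have hηle : η ≤ φM ^ 2 * δ := by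
    have h1 := hexc 0 (EuclideanSpace.single ⟨0, hn⟩ (1 : ℝ))
    set v : EuclideanSpace ℝ (Fin n) := EuclideanSpace.single ⟨0, hn⟩ (1 : ℝ) with hv
    have hvn : ‖v‖ = 1 := by simp [hv]
    rw [hvn] at h1
    simp only [Nat.cast_zero, zero_mul, zero_add, one_mul, one_pow, mul_one] at h1
    have h2 : ∫ s in (0:ℝ)..δ, ⟪φ s, v⟫ ^ 2 ≤ ∫ s in (0:ℝ)..δ, φM ^ 2 := by
      apply intervalIntegral.integral_mono_on hδ.le
      · exact Continuous.intervalIntegrable (by fun_prop) _ _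
      · exact Continuous.intervalIntegrable (by fun_prop) _ _
      · intro s hs
        have := abs_real_inner_le_norm (φ s) v
        rw [hvn, mul_one] at this
        rw [← sq_abs]
        exact pow_le_pow_left₀ (abs_nonneg _) (this.trans (hbound s hs.1)) 2
    rw [intervalIntegral.integral_const, smul_eq_mul] at h2
    linarith
  have hφM' : 0 < φM := by
    rcases hφM.eq_or_lt with h | h
    · rw [← h] at hηle; norm_num at hηle; linarith
    · exact h
  have hα0 : 0 < α := by rw [hα]; positivity
  have hα1 : α < 1 := by
    rw [hα, div_lt_one (by positivity)]
    nlinarith [sq_nonneg (φM ^ 2 * γ * δ), mul_le_mul_of_nonneg_right hηle hγ.le]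
  have hb0 : 0 < 1 - α := by linarith
  have hlog : Real.log (1 - α) < 0 := Real.log_neg hb0 (by linarith)
  refine ⟨?_, ?_, ?_⟩
  · rw [hκ]
    exact Real.one_le_rpow_of_pos_of_le_one_of_nonpos hb0 (by linarith) (by norm_num)
  · rw [hlam]
    exact div_pos (by linarith) (by positivity)
  · intro x hx t ht
    have hiter : ∀ k : ℕ, ‖x (k * δ)‖ ^ 2 ≤ (1 - α) ^ k * ‖x 0‖ ^ 2 := by
      intro k
      induction k with
      | zero => simp
      | succ k ih =>
        have h1 := aux_window hγ hφM' hδ hφc hbound hx (a := k * δ) (b := (k + 1) * δ)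
          (by positivity) (by ring) (hexc k _)
        rw [← hα] at h1
        push_cast
        calc _ ≤ _ := h1
          _ ≤ (1 - α) * ((1 - α) ^ k * ‖x 0‖ ^ 2) := by gcongr
          _ = _ := by ring
    set k := ⌊t / δ⌋₊ with hk
    have hk1 : (k : ℝ) * δ ≤ t := by
      have := Nat.floor_le (div_nonneg ht hδ.le)
      rwa [le_div_iff₀ hδ] at this
    have hk2 : t / δ - 1 ≤ k := by
      have := Nat.lt_floor_add_one (t / δ)
      linarith
    have h1 : ‖x t‖ ^ 2 ≤ ‖x (k * δ)‖ ^ 2 :=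
      aux_anti hγ hx (Set.mem_Ici.2 (by positivity)) (Set.mem_Ici.2 ht) hk1
    have h2 : (κ * Real.exp (-lam * t)) ^ 2 = (1 - α) ^ (t / δ - 1) := by
      rw [hκ, hlam, Real.rpow_def_of_pos hb0, Real.rpow_def_of_pos hb0, ← Real.exp_add,
        ← Real.exp_nat_mul]
      congr 1
      push_cast
      field_simp
      ring
    have h3 : (1 - α) ^ k ≤ (1 - α) ^ (t / δ - 1) := by
      rw [← Real.rpow_natCast]
      exact Real.rpow_le_rpow_of_exponent_ge hb0 (by linarith) hk2
    have hκ0 : 0 ≤ κ := by rw [hκ]; positivity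
    apply le_of_sq_le_sq _ (by positivity)
    rw [mul_pow, h2]
    calc _ ≤ _ := h1
      _ ≤ _ := hiter k
      _ ≤ _ := by gcongr
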